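/- In the tower construction, for every n ≥ 2: Bₙ = ⋂ { (Dₙ)_q : q ∈ Spec(Dₙ), q ≠ 𝓜ₙ }, the intersection taken inside the quotient field Kₙ. -/

import Mathlib

/- Preamble: the tower construction of Fontana–Kabbaj (Example 3.1).
All rings are realized as subsets/subrings of one ambient field `Amb k0 r`:
the rational function field over `k0` in the indeterminates
`X₁, X₂, …` (indexed by `ℕ`), `Y`, and `Z₁, …, Z_{r-1}`. -/

noncomputable section

open Polynomial

/-- Index type for the indeterminates: `Sum.inl n` is `Xₙ`, `Sum.inr (Sum.inl ())` is `Y`,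
and `Sum.inr (Sum.inr i)` is `Z_{i+1}`. -/
abbrev TowerVars (r : ℕ) : Type := ℕ ⊕ (Unit ⊕ Fin (r - 1))

/-- The ambient field: the fraction field of the polynomial ring over `k0` in all the
indeterminates. -/
abbrev Amb (k0 : Type) [Field k0] (r : ℕ) : Type :=
  FractionRing (MvPolynomial (TowerVars r) k0)

variable (k0 : Type) [Field k0] (r : ℕ)

/-- The indeterminate `Xₙ` as an element of the ambient field. -/
def ambX (n : ℕ) : Amb k0 r :=
  algebraMap (MvPolynomial (TowerVars r) k0) (Amb k0 r) (MvPolynomial.X (Sum.inl n))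

/-- The indeterminate `Y` as an element of the ambient field. -/
def ambY : Amb k0 r :=
  algebraMap (MvPolynomial (TowerVars r) k0) (Amb k0 r) (MvPolynomial.X (Sum.inr (Sum.inl ())))

/-- The indeterminates `Z₁, …, Z_{r-1}` as elements of the ambient field. -/
def ambZ (i : Fin (r - 1)) : Amb k0 r :=
  algebraMap (MvPolynomial (TowerVars r) k0) (Amb k0 r) (MvPolynomial.X (Sum.inr (Sum.inr i)))

/-- The image of the base field `k0` in the ambient field. -/
def baseSet : Set (Amb k0 r) :=
  Set.range fun c : k0 => algebraMap (MvPolynomial (TowerVars r) k0) (Amb k0 r) (MvPolynomial.C c)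

/-- `kₙ := k0(X₁, …, Xₙ)` as a subfield of the ambient field. -/
def kfld (n : ℕ) : Subfield (Amb k0 r) :=
  Subfield.closure (baseSet k0 r ∪ {x | ∃ i, 1 ≤ i ∧ i ≤ n ∧ x = ambX k0 r i})

/-- `Fₙ := kₙ(Z₁, …, Z_{r-1})`. -/
def Ffld (n : ℕ) : Subfield (Amb k0 r) :=
  Subfield.closure (↑(kfld k0 r n) ∪ Set.range (ambZ k0 r))

/-- `Kₙ := Fₙ(Y)`. -/
def Kfld (n : ℕ) : Subfield (Amb k0 r) :=
  Subfield.closure (↑(Ffld k0 r n) ∪ {ambY k0 r})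

/-- The polynomial ring `Fₙ[Y]` as a subring of the ambient field. -/
def polyRing (n : ℕ) : Subring (Amb k0 r) :=
  Subring.closure (↑(Ffld k0 r n) ∪ {ambY k0 r})

/-- `Vₙ := Fₙ[Y]_{(Y)}`, the localization of `Fₙ[Y]` at the prime `(Y)`, as a subset of
the ambient field. -/
def Vset (n : ℕ) : Set (Amb k0 r) :=
  {x | ∃ f ∈ polyRing k0 r n, ∃ g ∈ polyRing k0 r n,
    (¬ ∃ h ∈ polyRing k0 r n, g = ambY k0 r * h) ∧ x = f / g}

/-- `Mₙ := Y·Fₙ[Y]_{(Y)}`, the maximal ideal of `Vₙ`. -/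
def Mset (n : ℕ) : Set (Amb k0 r) :=
  {x | ∃ v ∈ Vset k0 r n, x = ambY k0 r * v}

/-- `Aₙ := kₙ + Mₙ`. -/
def Aset (n : ℕ) : Set (Amb k0 r) :=
  {x | ∃ c ∈ kfld k0 r n, ∃ m ∈ Mset k0 r n, x = c + m}

/-- `k := ⋃ₙ kₙ` as a subset of the ambient field. -/
def kfldU : Set (Amb k0 r) := ⋃ n, (kfld k0 r n : Set (Amb k0 r))

/-- `F := k(Z₁, …, Z_{r-1}) = ⋃ₙ Fₙ`. -/
def FfldU : Subfield (Amb k0 r) :=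
  Subfield.closure (kfldU k0 r ∪ Set.range (ambZ k0 r))

/-- `K := F(Y) = ⋃ₙ Kₙ`. -/
def KfldU : Subfield (Amb k0 r) :=
  Subfield.closure (↑(FfldU k0 r) ∪ {ambY k0 r})

/-- The polynomial ring `F[Y]`. -/
def polyRingU : Subring (Amb k0 r) :=
  Subring.closure (↑(FfldU k0 r) ∪ {ambY k0 r})

/-- `V := F[Y]_{(Y)}`. -/
def VsetU : Set (Amb k0 r) :=
  {x | ∃ f ∈ polyRingU k0 r, ∃ g ∈ polyRingU k0 r,
    (¬ ∃ h ∈ polyRingU k0 r, g = ambY k0 r * h) ∧ x = f / g}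

/-- `M := Y·F[Y]_{(Y)} = ⋃ₙ Mₙ`. -/
def MsetU : Set (Amb k0 r) :=
  {x | ∃ v ∈ VsetU k0 r, x = ambY k0 r * v}

/-- `A := k + M = ⋃ₙ Aₙ`. -/
def AsetU : Set (Amb k0 r) :=
  {x | ∃ c ∈ kfldU k0 r, ∃ m ∈ MsetU k0 r, x = c + m}

/-- `X′ₙ := (1 + Y·Xₙ)/Y`. -/
def ambX' (n : ℕ) : Amb k0 r :=
  (1 + ambY k0 r * ambX k0 r n) / ambY k0 r

/-- `1` belongs to the ideal of `W` generated by the coefficients of `g`, where `W` is a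
subring (given as a subset `S`) of the ambient field. -/
def unitContent (S : Set (Amb k0 r)) (g : Polynomial (Amb k0 r)) : Prop :=
  ∃ (t : Finset ℕ) (u : ℕ → Amb k0 r), (∀ i ∈ t, u i ∈ S) ∧ ∑ i ∈ t, u i * g.coeff i = 1

/-- The Nagata ring `W(T)` of a subring `W ⊆ Amb k0 r` (given as a subset `S`) in the
"variable" `T`: all fractions `f(T)/g(T)` with `f, g ∈ W[T]` and the coefficients of `g`
generating the unit ideal of `W`.  (When `T` is transcendental over `W` this is the usual
Nagata ring.) -/
def nagataSet (S : Set (Amb k0 r)) (T : Amb k0 r) : Set (Amb k0 r) :=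
  {x | ∃ f g : Polynomial (Amb k0 r), (∀ i, f.coeff i ∈ S) ∧ (∀ i, g.coeff i ∈ S) ∧
    unitContent k0 r S g ∧ x = f.eval T / g.eval T}

/-- The valuation overrings of a ring `D` (given as a subset) inside a subfield `L` of the
ambient field: subrings `W` with `D ⊆ W ⊆ L` such that for every `x ∈ L`, `x ∈ W` or
`x⁻¹ ∈ W`. -/
def valOverringsIn (D : Set (Amb k0 r)) (L : Subfield (Amb k0 r)) : Set (Subring (Amb k0 r)) :=
  {W | D ⊆ ↑W ∧ (W : Set (Amb k0 r)) ⊆ (L : Set (Amb k0 r)) ∧ ∀ x ∈ L, x ∈ W ∨ x⁻¹ ∈ W}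

/-- The Kronecker function ring `Kr_{L(T)}(D, b) = ⋂ {W(T) : W a valuation overring of `D`
in `L`}`, realized as a subset of the ambient field. -/
def krSet (D : Set (Amb k0 r)) (L : Subfield (Amb k0 r)) (T : Amb k0 r) : Set (Amb k0 r) :=
  ⋂ W ∈ valOverringsIn k0 r D L, nagataSet k0 r (↑W) T

/-- The tower `Dₙ`: `D₁ := A₁` and `Dₙ := Bₙ ∩ Aₙ` for `n ≥ 2`, where
`Bₙ := Kr_{K_{n-1}(X′ₙ)}(D_{n-1}, b)`.  (The value at `0` is junk, set to `D₁`.) -/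
def Dset : ℕ → Set (Amb k0 r)
  | 0 => Aset k0 r 1
  | 1 => Aset k0 r 1
  | n + 2 => krSet k0 r (Dset (n + 1)) (Kfld k0 r (n + 1)) (ambX' k0 r (n + 2)) ∩ Aset k0 r (n + 2)

/-- `Bₙ := Kr_{K_{n-1}(X′ₙ)}(D_{n-1}, b)` (meaningful for `n ≥ 2`). -/
def Bset (n : ℕ) : Set (Amb k0 r) :=
  krSet k0 r (Dset k0 r (n - 1)) (Kfld k0 r (n - 1)) (ambX' k0 r n)

/-- `𝓜ₙ := Mₙ ∩ Dₙ`. -/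
def MMset (n : ℕ) : Set (Amb k0 r) := Mset k0 r n ∩ Dset k0 r n

/-- `D := ⋃__{n ≥ 1} Dₙ`. -/
def DsetU : Set (Amb k0 r) := ⋃ n, Dset k0 r n

/-- `𝓜 := ⋃_{n ≥ 2} 𝓜ₙ`. -/
def MMsetU : Set (Amb k0 r) := ⋃ n, MMset k0 r (n + 2)

/-- The localization `D_m = {a/b : a, b ∈ D, b ∉ m}` of a subring `D` of the ambient
field (given as a subset) at (the complement of) a subset `m`. -/
def locAt (D m : Set (Amb k0 r)) : Set (Amb k0 r) :=
  {x | ∃ a ∈ D, ∃ b ∈ D, b ∉ m ∧ x = a / b}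

/-- The quotient field, inside the ambient field, of a subring given as a subset. -/
def qfSet (D : Set (Amb k0 r)) : Set (Amb k0 r) :=
  {x | ∃ a ∈ D, ∃ b ∈ D, b ≠ 0 ∧ x = a / b}

/-- The nonunits of a subring of the ambient field, given as a subset: in a local
subring of a field these form the maximal ideal. -/
def nonunitsIn (S : Set (Amb k0 r)) : Set (Amb k0 r) :=
  {x | x ∈ S ∧ (x = 0 ∨ x⁻¹ ∉ S)}

/-- A subring `A` of the ambient field is a pseudo-valuation domain: it is local, and its
maximal ideal (= set of nonunits) is also the maximal ideal of some valuation overring of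
`A` in its quotient field. -/
def IsPVDSub (A : Subring (Amb k0 r)) : Prop :=
  IsLocalRing ↥A ∧
  ∃ W : Subring (Amb k0 r), (A : Set (Amb k0 r)) ⊆ ↑W ∧
    (W : Set (Amb k0 r)) ⊆ qfSet k0 r ↑A ∧
    (∀ x ∈ qfSet k0 r (A : Set (Amb k0 r)), x ∈ W ∨ x⁻¹ ∈ W) ∧
    nonunitsIn k0 r ↑A = nonunitsIn k0 r ↑W

/-- The valuative dimension of a subring of the ambient field: the supremum of the Krull
dimensions of its valuation overrings (in its quotient field). -/
def subValuativeDim (A : Subring (Amb k0 r)) : WithBot ℕ∞ :=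
  ⨆ W : {W : Subring (Amb k0 r) // (A : Set (Amb k0 r)) ⊆ ↑W ∧
      (W : Set (Amb k0 r)) ⊆ qfSet k0 r ↑A ∧
      ∀ x ∈ qfSet k0 r (A : Set (Amb k0 r)), x ∈ W ∨ x⁻¹ ∈ W},
    ringKrullDim ↥(W : Subring (Amb k0 r))


/-- `1` belongs to the ideal generated by the coefficients of a multivariable polynomial
`g` in the subring given by the subset `S`. -/
def mvUnitContent (S : Set (Amb k0 r)) (g : MvPolynomial ℕ (Amb k0 r)) : Prop :=
  ∃ (t : Finset (ℕ →₀ ℕ)) (u : (ℕ →₀ ℕ) → Amb k0 r),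
    (∀ m ∈ t, u m ∈ S) ∧ ∑ m ∈ t, u m * MvPolynomial.coeff m g = 1

/-- The Nagata ring `W(T₀, T₁, …)` of a subring `W` of the ambient field (given as a
subset `S`) in countably many "variables" `T j`: all fractions `f(T)/g(T)` with
`f, g ∈ W[T₀, T₁, …]` and the coefficients of `g` generating the unit ideal of `W`. -/
def nagataSetMv (S : Set (Amb k0 r)) (T : ℕ → Amb k0 r) : Set (Amb k0 r) :=
  {x | ∃ f g : MvPolynomial ℕ (Amb k0 r),
    (∀ m, MvPolynomial.coeff m f ∈ S) ∧ (∀ m, MvPolynomial.coeff m g ∈ S) ∧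
    mvUnitContent k0 r S g ∧ x = MvPolynomial.eval T f / MvPolynomial.eval T g}

/-- A subring `S` of the ambient field is an *essential* domain: `S` is the intersection
of a family of localizations `S_p` at primes `p ∈ Δ`, each of which is a valuation domain
(with quotient field the quotient field of `S`). -/
def IsEssentialSub (S : Subring (Amb k0 r)) : Prop :=
  ∃ Δ : Set (Ideal ↥S),
    (∀ p ∈ Δ, p.IsPrime) ∧
    (∀ p ∈ Δ, ∀ x ∈ qfSet k0 r (S : Set (Amb k0 r)),
      x ∈ locAt k0 r ↑S (Subtype.val '' (p : Set ↥S)) ∨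
      x⁻¹ ∈ locAt k0 r ↑S (Subtype.val '' (p : Set ↥S))) ∧
    (S : Set (Amb k0 r)) = ⋂ p ∈ Δ, locAt k0 r ↑S (Subtype.val '' (p : Set ↥S))

end

open Polynomial in
theorem aux_closure_poly {E : Type*} [Field E] (L : Subfield E) (t x : E)
    (hx : x ∈ Subring.closure ((L : Set E) ∪ {t})) :
    ∃ p : E[X], (∀ i, p.coeff i ∈ L) ∧ x = p.eval t := by
  have key : Subring.closure ((L : Set E) ∪ {t}) ≤
      ((Polynomial.mapRingHom L.subtype).range).map (Polynomial.evalRingHom t) := by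
    rw [Subring.closure_le]
    rintro y (hy | hy)
    · exact ⟨C y, ⟨C ⟨y, hy⟩, by simp⟩, by simp⟩
    · rw [Set.mem_singleton_iff] at hy
      exact ⟨X, ⟨X, by simp⟩, by simp [hy]⟩
  obtain ⟨p, ⟨q, rfl⟩, rfl⟩ := key hx
  exact ⟨_, fun i => by simp, rfl⟩

theorem aux_eval_mem {E : Type*} [Field E] (S : Subring E) (t : E) (ht : t ∈ S)
    (p : Polynomial E) (hp : ∀ i, p.coeff i ∈ S) : p.eval t ∈ S := by
  rw [Polynomial.eval_eq_sum]
  exact Subring.sum_mem _ fun i _ => mul_mem (hp i) (pow_mem ht i)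

theorem aux_divX {E : Type*} [Field E] (p : Polynomial E) (t : E) :
    p.eval t = p.coeff 0 + t * p.divX.eval t := by
  have h := congrArg (Polynomial.eval t) (Polynomial.X_mul_divX_add p)
  rw [Polynomial.eval_add, Polynomial.eval_mul, Polynomial.eval_X, Polynomial.eval_C] at h
  rw [← h, add_comm]

theorem aux_field1 {E : Type*} [Field E] (F G P : E) (hG : G ≠ 0) (hP : P ≠ 0)
    (h : 1 + F / G * P⁻¹ ≠ 0) : F / G / (1 + F / G * P⁻¹) = F * P / (G * P + F) := by
  have e : 1 + F / G * P⁻¹ = (G * P + F) / (G * P) := by field_simp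
  rw [e] at h ⊢
  have h3 : G * P + F ≠ 0 := fun h' => h (by rw [h', zero_div])
  field_simp

theorem aux_field2 {E : Type*} [Field E] (c p : E) (h : 1 + c * p ≠ 0) :
    c / (1 + c * p) = c + -(c * p) * c * (1 + c * p)⁻¹ := by
  field_simp
  ring

section Y
variable (k0 : Type) [Field k0] (r : ℕ)

/-- All the indeterminates. -/
noncomputable def ambVar (i : TowerVars r) : Amb k0 r :=
  algebraMap (MvPolynomial (TowerVars r) k0) (Amb k0 r) (MvPolynomial.X i)

/-- The field generated by everything but `Y`. -/
noncomputable def bigF : IntermediateField k0 (Amb k0 r) :=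
  IntermediateField.adjoin k0 (ambVar k0 r '' {Sum.inr (Sum.inl ())}ᶜ)

theorem aux_transc : Transcendental (bigF k0 r) (ambY k0 r) := by
  have h : AlgebraicIndependent k0 (ambVar k0 r) := by
    have := (MvPolynomial.algebraicIndependent_X (TowerVars r) k0).map'
      (f := IsScalarTower.toAlgHom k0 (MvPolynomial (TowerVars r) k0) (Amb k0 r))
      (IsFractionRing.injective _ _)
    exact this
  have h2 := h.transcendental_adjoin (s := {Sum.inr (Sum.inl ())}ᶜ)
    (i := Sum.inr (Sum.inl ())) (by simp)
  intro h3
  exact h2 (IntermediateField.isAlgebraic_adjoin_iff.mp h3)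

theorem aux_kfld_le (n : ℕ) : kfld k0 r n ≤ (bigF k0 r).toSubfield := by
  rw [kfld, Subfield.closure_le]
  rintro x (⟨c, rfl⟩ | ⟨i, -, -, rfl⟩)
  · exact (bigF k0 r).algebraMap_mem c
  · exact IntermediateField.subset_adjoin _ _ ⟨Sum.inl i, by simp, rfl⟩

theorem aux_Ffld_le (n : ℕ) : Ffld k0 r n ≤ (bigF k0 r).toSubfield := by
  rw [Ffld, Subfield.closure_le]
  rintro x (hx | ⟨i, rfl⟩)
  · exact aux_kfld_le k0 r n hx
  · exact IntermediateField.subset_adjoin _ _ ⟨Sum.inr (Sum.inr i), by simp, rfl⟩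

theorem aux_const (n : ℕ) (c h : Amb k0 r) (hc : c ∈ Ffld k0 r n) (hh : h ∈ polyRing k0 r n)
    (e : c = ambY k0 r * h) : c = 0 := by
  obtain ⟨p, hp, rfl⟩ := aux_closure_poly _ _ _ hh
  have : p ∈ Polynomial.lifts (algebraMap (bigF k0 r) (Amb k0 r)) := by
    rw [Polynomial.lifts_iff_coeff_lifts]
    exact fun i => ⟨⟨_, aux_Ffld_le k0 r n (hp i)⟩, rfl⟩
  obtain ⟨q, rfl⟩ := (Polynomial.mem_lifts _).1 this
  have ht := aux_transc k0 r
  rw [transcendental_iff] at ht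
  have := ht (Polynomial.X * q - Polynomial.C ⟨c, aux_Ffld_le k0 r n hc⟩) (by
    rw [map_sub, map_mul, Polynomial.aeval_X, Polynomial.aeval_C, Polynomial.aeval_def,
      ← Polynomial.eval_map]
    exact sub_eq_zero.2 e.symm)
  have := congrArg (fun p => Polynomial.coeff p 0) this
  simp only [Polynomial.coeff_sub, Polynomial.coeff_X_mul_zero, Polynomial.coeff_C_zero,
    Polynomial.coeff_zero, zero_sub, neg_eq_zero] at this
  exact congrArg Subtype.val this

theorem aux_Y_ne : ambY k0 r ≠ 0 := by
  intro h
  have := aux_const k0 r 0 1 0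
  have h2 := aux_transc k0 r
  rw [h] at h2
  exact h2 isAlgebraic_zero

/-- Y divides in the polynomial ring. -/
def Ydvd (n : ℕ) (g : Amb k0 r) : Prop := ∃ h ∈ polyRing k0 r n, g = ambY k0 r * h

theorem F_mem_poly {n : ℕ} {c : Amb k0 r} (hc : c ∈ Ffld k0 r n) : c ∈ polyRing k0 r n :=
  Subring.subset_closure (Or.inl hc)

theorem Y_mem_poly (n : ℕ) : ambY k0 r ∈ polyRing k0 r n :=
  Subring.subset_closure (Or.inr rfl)

theorem poly_split {n : ℕ} {g : Amb k0 r} (hg : g ∈ polyRing k0 r n) :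
    ∃ c ∈ Ffld k0 r n, ∃ h ∈ polyRing k0 r n, g = c + ambY k0 r * h := by
  obtain ⟨p, hp, rfl⟩ := aux_closure_poly _ _ _ hg
  refine ⟨p.coeff 0, hp 0, p.divX.eval (ambY k0 r),
    aux_eval_mem _ _ (Y_mem_poly k0 r n) _ fun i => F_mem_poly k0 r ?_, ?_⟩
  · rw [Polynomial.coeff_divX]; exact hp _
  · exact aux_divX p _

theorem not_Ydvd_one (n : ℕ) : ¬ Ydvd k0 r n 1 := by
  rintro ⟨h, hh, e⟩
  exact one_ne_zero (aux_const k0 r n 1 h (one_mem _) hh e)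

theorem not_Ydvd_mul {n : ℕ} {f g : Amb k0 r} (hf : f ∈ polyRing k0 r n)
    (hg : g ∈ polyRing k0 r n) (h1 : ¬ Ydvd k0 r n f) (h2 : ¬ Ydvd k0 r n g) :
    ¬ Ydvd k0 r n (f * g) := by
  obtain ⟨c, hc, a, ha, rfl⟩ := poly_split k0 r hf
  obtain ⟨d, hd, b, hb, rfl⟩ := poly_split k0 r hg
  rintro ⟨h, hh, e⟩
  have := aux_const k0 r n (c * d) (h - (a * d + c * b + ambY k0 r * a * b)) (mul_mem hc hd)
    (sub_mem hh (add_mem (add_mem (mul_mem ha (F_mem_poly k0 r hd))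
      (mul_mem (F_mem_poly k0 r hc) hb)) (mul_mem (mul_mem (Y_mem_poly k0 r n) ha) hb)))
    (by linear_combination e)
  rcases mul_eq_zero.1 this with rfl | rfl
  · exact h1 ⟨a, ha, by simp⟩
  · exact h2 ⟨b, hb, by simp⟩

theorem ne_zero_of_not_Ydvd {n : ℕ} {g : Amb k0 r} (h : ¬ Ydvd k0 r n g) : g ≠ 0 := by
  rintro rfl
  exact h ⟨0, zero_mem _, by simp⟩

theorem poly_factor {n : ℕ} {g : Amb k0 r} (hg : g ∈ polyRing k0 r n) (h0 : g ≠ 0) :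
    ∃ N : ℕ, ∃ h ∈ polyRing k0 r n, ¬ Ydvd k0 r n h ∧ g = ambY k0 r ^ N * h := by
  obtain ⟨p, hp, rfl⟩ := aux_closure_poly _ _ _ hg
  induction hd : p.natDegree using Nat.strong_induction_on generalizing p with
  | _ d ih =>
    by_cases hc : p.coeff 0 = 0
    · have e : p.eval (ambY k0 r) = ambY k0 r * p.divX.eval (ambY k0 r) := by
        rw [aux_divX p, hc, zero_add]
      have hp' : ∀ i, p.divX.coeff i ∈ Ffld k0 r n := fun i => by
        rw [Polynomial.coeff_divX]; exact hp _
      have h0' : p.divX.eval (ambY k0 r) ≠ 0 := fun h => h0 (by rw [e, h, mul_zero])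
      have hdeg : p.divX.natDegree < d := by
        rw [Polynomial.natDegree_divX_eq_natDegree_tsub_one]
        have : p.natDegree ≠ 0 := by
          intro hz
          rw [Polynomial.eq_C_of_natDegree_eq_zero hz, hc] at h0
          simp at h0
        omega
      obtain ⟨N, h, hh, hn, e2⟩ := ih _ hdeg p.divX hp'
        (aux_eval_mem _ _ (Y_mem_poly k0 r n) _ fun i => F_mem_poly k0 r (hp' i)) h0' rfl
      exact ⟨N + 1, h, hh, hn, by rw [e, e2]; ring⟩
    · refine ⟨0, _, hg, ?_, by simp⟩
      rintro ⟨h, hh, e⟩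
      refine hc (aux_const k0 r n (p.coeff 0) (h - p.divX.eval (ambY k0 r)) (hp 0)
        (sub_mem hh (aux_eval_mem _ _ (Y_mem_poly k0 r n) _ fun i => F_mem_poly k0 r ?_)) ?_)
      · rw [Polynomial.coeff_divX]; exact hp _
      · rw [aux_divX p] at e
        linear_combination e

/-- `Vₙ` as a subring. -/
noncomputable def Vring (n : ℕ) : Subring (Amb k0 r) where
  carrier := Vset k0 r n
  one_mem' := ⟨1, one_mem _, 1, one_mem _, not_Ydvd_one k0 r n, by simp⟩
  zero_mem' := ⟨0, zero_mem _, 1, one_mem _, not_Ydvd_one k0 r n, by simp⟩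
  mul_mem' := by
    rintro _ _ ⟨f, hf, g, hg, h, rfl⟩ ⟨f', hf', g', hg', h', rfl⟩
    exact ⟨f * f', mul_mem hf hf', g * g', mul_mem hg hg', not_Ydvd_mul k0 r hg hg' h h',
      by rw [div_mul_div_comm]⟩
  add_mem' := by
    rintro _ _ ⟨f, hf, g, hg, h, rfl⟩ ⟨f', hf', g', hg', h', rfl⟩
    exact ⟨f * g' + g * f', add_mem (mul_mem hf hg') (mul_mem hg hf'), g * g', mul_mem hg hg',
      not_Ydvd_mul k0 r hg hg' h h',
      by rw [div_add_div _ _ (ne_zero_of_not_Ydvd k0 r h) (ne_zero_of_not_Ydvd k0 r h')]⟩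
  neg_mem' := by
    rintro _ ⟨f, hf, g, hg, h, rfl⟩
    exact ⟨-f, neg_mem hf, g, hg, h, by rw [neg_div]⟩

theorem poly_mem_V {n : ℕ} {g : Amb k0 r} (hg : g ∈ polyRing k0 r n) : g ∈ Vring k0 r n :=
  ⟨g, hg, 1, one_mem _, not_Ydvd_one k0 r n, by simp⟩

theorem k_mem_V {n : ℕ} {c : Amb k0 r} (hc : c ∈ kfld k0 r n) : c ∈ Vring k0 r n :=
  poly_mem_V k0 r (F_mem_poly k0 r (Subfield.subset_closure (Or.inl hc)))

theorem M_mul {n : ℕ} {m v : Amb k0 r} (hm : m ∈ Mset k0 r n) (hv : v ∈ Vring k0 r n) :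
    m * v ∈ Mset k0 r n := by
  obtain ⟨w, hw, rfl⟩ := hm
  exact ⟨w * v, (Vring k0 r n).mul_mem hw hv, by ring⟩

theorem M_add {n : ℕ} {m m' : Amb k0 r} (hm : m ∈ Mset k0 r n) (hv : m' ∈ Mset k0 r n) :
    m + m' ∈ Mset k0 r n := by
  obtain ⟨w, hw, rfl⟩ := hm
  obtain ⟨w', hw', rfl⟩ := hv
  exact ⟨w + w', (Vring k0 r n).add_mem hw hw', by ring⟩

theorem M_sub_V {n : ℕ} {m : Amb k0 r} (hm : m ∈ Mset k0 r n) : m ∈ Vring k0 r n := by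
  obtain ⟨w, hw, rfl⟩ := hm
  exact (Vring k0 r n).mul_mem (poly_mem_V k0 r (Y_mem_poly k0 r n)) hw

theorem M_sub_A {n : ℕ} {m : Amb k0 r} (hm : m ∈ Mset k0 r n) : m ∈ Aset k0 r n :=
  ⟨0, zero_mem _, m, hm, by simp⟩

theorem one_add_M {n : ℕ} {m : Amb k0 r} (hm : m ∈ Mset k0 r n) :
    1 + m ≠ 0 ∧ (1 + m)⁻¹ ∈ Vring k0 r n := by
  obtain ⟨w, ⟨f, hf, g, hg, h, rfl⟩, rfl⟩ := hm
  have hg0 := ne_zero_of_not_Ydvd k0 r h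
  have hnd : ¬ Ydvd k0 r n (g + ambY k0 r * f) := by
    rintro ⟨a, ha, e⟩
    exact h ⟨a - f, sub_mem ha hf, by linear_combination e⟩
  have e : 1 + ambY k0 r * (f / g) = (g + ambY k0 r * f) / g := by field_simp
  rw [e]
  refine ⟨div_ne_zero (ne_zero_of_not_Ydvd k0 r hnd) hg0, g, hg, _,
    add_mem hg (mul_mem (Y_mem_poly k0 r n) hf), hnd, by rw [inv_div]⟩

theorem K_scale {n : ℕ} {x : Amb k0 r} (hx : x ∈ Kfld k0 r n) :
    ∃ N : ℕ, ambY k0 r ^ N * x ∈ Vring k0 r n := by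
  obtain ⟨y, hy, z, hz, rfl⟩ := Subfield.mem_closure_iff.1 hx
  by_cases h0 : z = 0
  · exact ⟨0, by simp [h0, zero_mem]⟩
  obtain ⟨N, h, hh, hn, rfl⟩ := poly_factor k0 r hz h0
  have := aux_Y_ne k0 r
  have := ne_zero_of_not_Ydvd k0 r hn
  exact ⟨N, y, hy, h, hh, hn, by field_simp⟩

theorem poly_sub_K {n : ℕ} {x : Amb k0 r} (hx : x ∈ polyRing k0 r n) : x ∈ Kfld k0 r n :=
  Subfield.subring_closure_le _ hx

theorem A_sub_K {n : ℕ} {x : Amb k0 r} (hx : x ∈ Aset k0 r n) : x ∈ Kfld k0 r n := by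
  obtain ⟨c, hc, m, ⟨v, ⟨f, hf, g, hg, -, rfl⟩, rfl⟩, rfl⟩ := hx
  exact add_mem (poly_sub_K k0 r (F_mem_poly k0 r (Subfield.subset_closure (Or.inl hc))))
    (mul_mem (poly_sub_K k0 r (Y_mem_poly k0 r n))
      (div_mem (poly_sub_K k0 r hf) (poly_sub_K k0 r hg)))

theorem D_sub_A (n : ℕ) : Dset k0 r (n + 1) ⊆ Aset k0 r (n + 1) := by
  cases n with
  | zero => exact subset_rfl
  | succ m => exact Set.inter_subset_right

theorem k_mono {m n : ℕ} (h : m ≤ n) : kfld k0 r m ≤ kfld k0 r n :=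
  Subfield.closure_mono (Set.union_subset_union_right _ (by
    rintro x ⟨i, h1, h2, e⟩; exact ⟨i, h1, h2.trans h, e⟩))

theorem F_mono {m n : ℕ} (h : m ≤ n) : Ffld k0 r m ≤ Ffld k0 r n :=
  Subfield.closure_mono (Set.union_subset_union_left _ (k_mono k0 r h))

theorem K_mono {m n : ℕ} (h : m ≤ n) : Kfld k0 r m ≤ Kfld k0 r n :=
  Subfield.closure_mono (Set.union_subset_union_left _ (F_mono k0 r h))

theorem k_le_K (n : ℕ) : kfld k0 r n ≤ Kfld k0 r n := fun _ hc =>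
  poly_sub_K k0 r (F_mem_poly k0 r (Subfield.subset_closure (Or.inl hc)))

theorem X_mem_k {n : ℕ} (hn : 1 ≤ n) : ambX k0 r n ∈ kfld k0 r n :=
  Subfield.subset_closure (Or.inr ⟨n, hn, le_rfl, rfl⟩)

theorem T_eq (n : ℕ) : ambX' k0 r n = (ambY k0 r)⁻¹ + ambX k0 r n := by
  have := aux_Y_ne k0 r
  rw [ambX']; field_simp

theorem T_mem_K {n : ℕ} (hn : 1 ≤ n) : ambX' k0 r n ∈ Kfld k0 r n := by
  rw [T_eq]
  exact add_mem (inv_mem (poly_sub_K k0 r (Y_mem_poly k0 r n)))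
    (k_le_K k0 r n (X_mem_k k0 r hn))

theorem Tinv_mem_M {n : ℕ} (hn : 1 ≤ n) :
    ambX' k0 r n ≠ 0 ∧ (ambX' k0 r n)⁻¹ ∈ Mset k0 r n := by
  have hY := aux_Y_ne k0 r
  have hM : ambY k0 r * ambX k0 r n ∈ Mset k0 r n :=
    ⟨_, k_mem_V k0 r (X_mem_k k0 r hn), rfl⟩
  obtain ⟨h1, h2⟩ := one_add_M k0 r hM
  refine ⟨div_ne_zero h1 hY, _, h2, ?_⟩
  rw [ambX', inv_div, div_eq_mul_inv]

/-- elements of `k_n` as fractions in `T`. -/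
theorem k_frac {n : ℕ} {c : Amb k0 r} (hc : c ∈ kfld k0 r (n + 1)) :
    ∃ f g : Polynomial (Amb k0 r), (∀ i, f.coeff i ∈ Kfld k0 r n) ∧
      (∀ i, g.coeff i ∈ Kfld k0 r n) ∧
      c = f.eval (ambX' k0 r (n + 1)) / g.eval (ambX' k0 r (n + 1)) := by
  have hle : kfld k0 r (n + 1) ≤
      Subfield.closure ((Kfld k0 r n : Set (Amb k0 r)) ∪ {ambX' k0 r (n + 1)}) := by
    rw [kfld, Subfield.closure_le]
    rintro x (hx | ⟨i, h1, h2, rfl⟩)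
    · exact Subfield.subset_closure (Or.inl (k_le_K k0 r n (Subfield.subset_closure (Or.inl hx))))
    · rcases Nat.lt_or_ge n i with h | h
      · obtain rfl : i = n + 1 := by omega
        have e : ambX k0 r (n + 1) = ambX' k0 r (n + 1) - (ambY k0 r)⁻¹ := by rw [T_eq]; ring
        rw [e]
        exact sub_mem (Subfield.subset_closure (Or.inr rfl)) (Subfield.subset_closure
          (Or.inl (inv_mem (poly_sub_K k0 r (Y_mem_poly k0 r n)))))
      · exact Subfield.subset_closure (Or.inl (K_mono k0 r h (k_le_K k0 r i (X_mem_k k0 r h1))))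
  obtain ⟨y, hy, z, hz, rfl⟩ := Subfield.mem_closure_iff.1 (hle hc)
  obtain ⟨f, hf, rfl⟩ := aux_closure_poly _ _ _ hy
  obtain ⟨g, hg, rfl⟩ := aux_closure_poly _ _ _ hz
  exact ⟨f, g, hf, hg, rfl⟩

theorem unitContent_iff (W : Subring (Amb k0 r)) (q : Polynomial W) :
    unitContent k0 r W (q.map W.subtype) ↔ q.contentIdeal = ⊤ := by
  rw [Ideal.eq_top_iff_one]
  constructor
  · rintro ⟨t, u, hu, e⟩
    have : (1 : W) = ∑ i ∈ t.attach, (⟨u i, hu i i.2⟩ : W) * q.coeff i := by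
      apply Subtype.ext
      rw [Subring.coe_one, ← e, ← Finset.sum_attach]
      simp
    rw [this]
    exact Ideal.sum_mem _ fun i _ => Ideal.mul_mem_left _ _ (q.coeff_mem_contentIdeal _)
  · intro h
    have : ∀ y ∈ q.contentIdeal, ∃ u : ℕ → W, ∃ t : Finset ℕ, ∑ i ∈ t, u i * q.coeff i = y := by
      intro y hy
      have hle : q.contentIdeal ≤ Submodule.span W (Set.range q.coeff) := by
        rw [Polynomial.contentIdeal_def]
        apply Submodule.span_mono
        intro z hz
        obtain ⟨n, -, rfl⟩ := Polynomial.mem_coeffs_iff.1 (Finset.mem_coe.1 hz)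
        exact ⟨n, rfl⟩
      obtain ⟨c, rfl⟩ := Finsupp.mem_span_range_iff_exists_finsupp.1 (hle hy)
      exact ⟨c, c.support, rfl⟩
    obtain ⟨u, t, e⟩ := this 1 h
    refine ⟨t, fun i => u i, fun i _ => (u i).2, ?_⟩
    have := congrArg W.subtype e
    simpa using this

theorem nagata_mul (W : Subring (Amb k0 r)) (T x y : Amb k0 r)
    (hx : x ∈ nagataSet k0 r W T) (hy : y ∈ nagataSet k0 r W T) :
    x * y ∈ nagataSet k0 r W T := by
  obtain ⟨f, g, hf, hg, hu, rfl⟩ := hx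
  obtain ⟨f', g', hf', hg', hu', rfl⟩ := hy
  have lift : ∀ p : Polynomial (Amb k0 r), (∀ i, p.coeff i ∈ (W : Set (Amb k0 r))) →
      ∃ q : Polynomial W, q.map W.subtype = p := fun p hp =>
    (Polynomial.mem_lifts _).1 ((Polynomial.lifts_iff_coeff_lifts _).2 fun i => ⟨⟨_, hp i⟩, rfl⟩)
  obtain ⟨f, rfl⟩ := lift f hf
  obtain ⟨g, rfl⟩ := lift g hg
  obtain ⟨f', rfl⟩ := lift f' hf'
  obtain ⟨g', rfl⟩ := lift g' hg'
  refine ⟨(f * f').map W.subtype, (g * g').map W.subtype, fun i => ?_, fun i => ?_, ?_, ?_⟩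
  · rw [Polynomial.coeff_map]; exact Subtype.prop _
  · rw [Polynomial.coeff_map]; exact Subtype.prop _
  · rw [unitContent_iff] at hu hu' ⊢
    exact Polynomial.contentIdeal_mul_eq_top_of_contentIdeal_eq_top hu hu'
  · simp only [Polynomial.map_mul, Polynomial.eval_mul, div_mul_div_comm]

theorem nagata_poly (W : Subring (Amb k0 r)) (T : Amb k0 r) : T ∈ nagataSet k0 r W T := by
  refine ⟨Polynomial.X, 1, fun i => ?_, fun i => ?_, ⟨{0}, fun _ => 1, ?_, ?_⟩, by simp⟩
  · rw [Polynomial.coeff_X]; split_ifs; exacts [W.one_mem, W.zero_mem]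
  · rw [Polynomial.coeff_one]; split_ifs; exacts [W.one_mem, W.zero_mem]
  · intro _ _; exact W.one_mem
  · simp

theorem nagata_Tinv (W : Subring (Amb k0 r)) (T : Amb k0 r) : T⁻¹ ∈ nagataSet k0 r W T := by
  refine ⟨1, Polynomial.X, fun i => ?_, fun i => ?_, ⟨{1}, fun _ => 1, ?_, ?_⟩, by simp⟩
  · rw [Polynomial.coeff_one]; split_ifs; exacts [W.one_mem, W.zero_mem]
  · rw [Polynomial.coeff_X]; split_ifs; exacts [W.one_mem, W.zero_mem]
  · intro _ _; exact W.one_mem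
  · simp

theorem nagata_one (W : Subring (Amb k0 r)) (T : Amb k0 r) : 1 ∈ nagataSet k0 r W T := by
  refine ⟨1, 1, fun i => ?_, fun i => ?_, ⟨{0}, fun _ => 1, ?_, ?_⟩, by simp⟩
  · rw [Polynomial.coeff_one]; split_ifs; exacts [W.one_mem, W.zero_mem]
  · rw [Polynomial.coeff_one]; split_ifs; exacts [W.one_mem, W.zero_mem]
  · intro _ _; exact W.one_mem
  · simp

/-- The Kronecker function ring as a monoid. -/
noncomputable def krMon (D : Set (Amb k0 r)) (L : Subfield (Amb k0 r)) (T : Amb k0 r) :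
    Submonoid (Amb k0 r) where
  carrier := krSet k0 r D L T
  one_mem' := Set.mem_iInter₂.2 fun W _ => nagata_one k0 r W T
  mul_mem' := fun hx hy => Set.mem_iInter₂.2 fun W hW => nagata_mul k0 r W T _ _
    (Set.mem_iInter₂.1 hx W hW) (Set.mem_iInter₂.1 hy W hW)

theorem aux_max (W : Subring (Amb k0 r)) (L : Subfield (Amb k0 r))
    (hW : ∀ x ∈ L, x ∈ W ∨ x⁻¹ ∈ W) (s : Finset (Amb k0 r)) (hs : s.Nonempty)
    (h0 : ∀ x ∈ s, x ≠ 0) (hL : ∀ x ∈ s, x ∈ L) :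
    ∃ a ∈ s, ∀ b ∈ s, b / a ∈ W := by
  classical
  induction hs using Finset.Nonempty.cons_induction with
  | singleton a =>
    refine ⟨a, by simp, fun b hb => ?_⟩
    rw [Finset.mem_singleton] at hb
    subst hb
    rw [div_self (h0 b (by simp))]; exact W.one_mem
  | cons b s hb hs ih =>
    obtain ⟨a, ha, h⟩ := ih (fun x hx => h0 x (Finset.mem_cons_of_mem hx))
      (fun x hx => hL x (Finset.mem_cons_of_mem hx))
    have hb0 := h0 b (Finset.mem_cons_self _ _)
    have ha0 := h0 a (Finset.mem_cons_of_mem ha)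
    rcases hW (b / a) (div_mem (hL b (Finset.mem_cons_self _ _))
      (hL a (Finset.mem_cons_of_mem ha))) with h1 | h1
    · refine ⟨a, Finset.mem_cons_of_mem ha, fun c hc => ?_⟩
      rcases Finset.mem_cons.1 hc with rfl | hc
      · exact h1
      · exact h c hc
    · refine ⟨b, Finset.mem_cons_self _ _, fun c hc => ?_⟩
      rcases Finset.mem_cons.1 hc with rfl | hc
      · rw [div_self hb0]; exact W.one_mem
      · have : c / b = c / a * (b / a)⁻¹ := by field_simp
        rw [this]; exact W.mul_mem (h c hc) h1

theorem aux_nagata_mem (W : Subring (Amb k0 r)) (L : Subfield (Amb k0 r))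
    (hW : ∀ x ∈ L, x ∈ W ∨ x⁻¹ ∈ W) (T : Amb k0 r) (f g : Polynomial (Amb k0 r)) (hg0 : g ≠ 0)
    (hg : ∀ i, g.coeff i ∈ L) (hfg : ∀ i, f.coeff i = 0 ∨ ∃ j, f.coeff i = g.coeff j) :
    f.eval T / g.eval T ∈ nagataSet k0 r W T := by
  classical
  obtain ⟨a, ha, h⟩ := aux_max k0 r W L hW (g.support.image g.coeff)
    ((Polynomial.support_nonempty.2 hg0).image _)
    (by
      intro x hx
      obtain ⟨i, hi, rfl⟩ := Finset.mem_image.1 hx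
      exact Polynomial.mem_support_iff.1 hi)
    (by
      intro x hx
      obtain ⟨i, hi, rfl⟩ := Finset.mem_image.1 hx
      exact hg i)
  obtain ⟨i, hi, rfl⟩ := Finset.mem_image.1 ha
  have ha0 := Polynomial.mem_support_iff.1 hi
  have hgW : ∀ j, (g.coeff i)⁻¹ * g.coeff j ∈ W := by
    intro j
    by_cases hj : g.coeff j = 0
    · rw [hj, mul_zero]; exact W.zero_mem
    · rw [mul_comm, ← div_eq_mul_inv]
      exact h _ (Finset.mem_image_of_mem _ (Polynomial.mem_support_iff.2 hj))
  refine ⟨Polynomial.C (g.coeff i)⁻¹ * f, Polynomial.C (g.coeff i)⁻¹ * g, fun j => ?_, fun j => ?_,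
    ⟨{i}, fun _ => 1, fun _ _ => W.one_mem, ?_⟩, ?_⟩
  · rw [Polynomial.coeff_C_mul]
    rcases hfg j with h | ⟨l, h⟩
    · rw [h, mul_zero]; exact W.zero_mem
    · rw [h]; exact hgW l
  · rw [Polynomial.coeff_C_mul]; exact hgW j
  · simp [ha0]
  · simp only [Polynomial.eval_mul, Polynomial.eval_C]
    rw [mul_div_mul_left _ _ (inv_ne_zero ha0)]

/-- approximation of nonzero elements of `k_n` modulo `M_n` by elements of a Kronecker ring. -/
theorem aux_approx (D : Set (Amb k0 r)) {n : ℕ} {c : Amb k0 r} (hc : c ∈ kfld k0 r (n + 1))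
    (hc0 : c ≠ 0) :
    ∃ e ∈ krSet k0 r D (Kfld k0 r n) (ambX' k0 r (n + 1)), ∃ m ∈ Mset k0 r (n + 1), e = c + m := by
  obtain ⟨f, g, hf, hg, e⟩ := k_frac k0 r hc
  obtain ⟨hT0, hTM⟩ := Tinv_mem_M k0 r (n := n + 1) (by omega)
  set T := ambX' k0 r (n + 1) with hTdef
  have hfT : f.eval T ≠ 0 := fun h => hc0 (by rw [e, h, zero_div])
  have hgT : g.eval T ≠ 0 := fun h => hc0 (by rw [e, h, div_zero])
  set L := f.natDegree with hL
  have hm : c * (T⁻¹) ^ (L + 1) ∈ Mset k0 r (n + 1) := by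
    have := M_mul k0 r hTM ((Vring k0 r (n + 1)).mul_mem (k_mem_V k0 r hc)
      ((Vring k0 r (n + 1)).pow_mem (M_sub_V k0 r hTM) L))
    convert this using 1
    ring
  obtain ⟨h1, h2⟩ := one_add_M k0 r hm
  refine ⟨c / (1 + c * (T⁻¹) ^ (L + 1)), ?_, -(c * (T⁻¹) ^ (L + 1)) * c *
    (1 + c * (T⁻¹) ^ (L + 1))⁻¹, ?_, ?_⟩
  · refine Set.mem_iInter₂.2 fun W hW => ?_
    have hlo : ∀ i ≤ L, (g * Polynomial.X ^ (L + 1) + f).coeff i = f.coeff i := by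
      intro i hi
      rw [Polynomial.coeff_add, Polynomial.coeff_mul_X_pow', if_neg (by omega), zero_add]
    have hhi : ∀ i, L < i → f.coeff i = 0 := fun i hi =>
      Polynomial.coeff_eq_zero_of_natDegree_lt hi
    have hne : g * Polynomial.X ^ (L + 1) + f ≠ 0 := by
      intro h
      apply hfT
      have : f = 0 := by
        ext i
        rcases Nat.lt_or_ge L i with hi | hi
        · rw [hhi i hi]; simp
        · rw [← hlo i hi, h]
      rw [this]; simp
    have := aux_nagata_mem k0 r W (Kfld k0 r n) hW.2.2 T (f * Polynomial.X ^ (L + 1))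
      (g * Polynomial.X ^ (L + 1) + f) hne
      (by
        intro i
        rw [Polynomial.coeff_add, Polynomial.coeff_mul_X_pow']
        refine add_mem ?_ (hf i)
        split_ifs
        · exact hg _
        · exact zero_mem _)
      (by
        intro i
        rw [Polynomial.coeff_mul_X_pow']
        split_ifs
        · rcases Nat.lt_or_ge L (i - (L + 1)) with hi | hi
          · left; exact hhi _ hi
          · right; exact ⟨_, (hlo _ hi).symm⟩
        · left; rfl)
    convert this using 1
    rw [e] at h1 ⊢
    simp only [Polynomial.eval_mul, Polynomial.eval_add, Polynomial.eval_pow, Polynomial.eval_X]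
    rw [inv_pow] at h1 ⊢
    exact aux_field1 _ _ _ hgT (pow_ne_zero _ hT0) h1
  · refine M_mul k0 r (M_mul k0 r ?_ (k_mem_V k0 r hc)) h2
    have := M_mul k0 r hm ((Vring k0 r (n+1)).neg_mem (Vring k0 r (n+1)).one_mem)
    simpa using this
  · exact aux_field2 _ _ h1

theorem kr_sub_K {n : ℕ} {x : Amb k0 r}
    (hx : x ∈ Bset k0 r (n + 2)) : x ∈ Kfld k0 r (n + 2) := by
  have hW : (Kfld k0 r (n + 1)).toSubring ∈
      valOverringsIn k0 r (Dset k0 r (n + 1)) (Kfld k0 r (n + 1)) :=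
    ⟨fun y hy => A_sub_K k0 r (D_sub_A k0 r n hy), subset_rfl, fun y hy => Or.inl hy⟩
  obtain ⟨f, g, hf, hg, -, rfl⟩ := Set.mem_iInter₂.1 hx _ hW
  have hT := T_mem_K k0 r (n := n + 2) (by omega)
  have hle := K_mono k0 r (show n + 1 ≤ n + 2 by omega)
  exact div_mem (aux_eval_mem (Kfld k0 r (n + 2)).toSubring _ hT f fun i => hle (hf i))
    (aux_eval_mem (Kfld k0 r (n + 2)).toSubring _ hT g fun i => hle (hg i))

end Y

/-- In the tower construction, for every `n ≥ 2`,
`Bₙ = ⋂ {(Dₙ)_q : q ∈ Spec(Dₙ), q ≠ 𝓜ₙ}`, the intersection taken inside the quotient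
field. -/
theorem tower_B_eq_iInter_localizations
    (k0 : Type) [Field k0] (r : ℕ) (hr : 2 ≤ r) (n : ℕ) (hn : 2 ≤ n) :
    ∀ D' : Subring (Amb k0 r), (D' : Set (Amb k0 r)) = Dset k0 r n →
      Bset k0 r n =
        ⋂ q ∈ {q : Ideal ↥D' | q.IsPrime ∧ Subtype.val '' (q : Set ↥D') ≠ MMset k0 r n},
          locAt k0 r (Dset k0 r n) (Subtype.val '' (q : Set ↥D')) := by
  obtain ⟨m, rfl⟩ : ∃ m, n = m + 2 := ⟨n - 2, by omega⟩
  clear hn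
  intro D' hD'
  have hDdef : Dset k0 r (m + 2) = Bset k0 r (m + 2) ∩ Aset k0 r (m + 2) := rfl
  have hBmul : ∀ {x y}, x ∈ Bset k0 r (m + 2) → y ∈ Bset k0 r (m + 2) →
      x * y ∈ Bset k0 r (m + 2) := fun hx hy => (krMon k0 r _ _ _).mul_mem hx hy
  have hBpow : ∀ {x} (N : ℕ), x ∈ Bset k0 r (m + 2) → x ^ N ∈ Bset k0 r (m + 2) :=
    fun N hx => (krMon k0 r _ _ _).pow_mem hx N
  have hTB : ambX' k0 r (m + 2) ∈ Bset k0 r (m + 2) :=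
    Set.mem_iInter₂.2 fun W _ => nagata_poly k0 r W _
  have hTiB : (ambX' k0 r (m + 2))⁻¹ ∈ Bset k0 r (m + 2) :=
    Set.mem_iInter₂.2 fun W _ => nagata_Tinv k0 r W _
  obtain ⟨hT0, hTM⟩ := Tinv_mem_M k0 r (n := m + 2) (by omega)
  have hmem : ∀ {x}, x ∈ D' ↔ x ∈ Dset k0 r (m + 2) := fun {x} => by
    rw [← hD', SetLike.mem_coe]
  have hMD : ∀ {x}, x ∈ Bset k0 r (m + 2) → x ∈ Mset k0 r (m + 2) → x ∈ D' :=
    fun h1 h2 => hmem.2 ⟨h1, M_sub_A k0 r h2⟩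
  apply Set.Subset.antisymm
  · intro x hx
    refine Set.mem_iInter₂.2 fun q hq => ?_
    obtain ⟨hqp, hqM⟩ := hq
    by_cases hsub : MMset k0 r (m + 2) ⊆ Subtype.val '' (q : Set D')
    · exfalso
      have : ¬ Subtype.val '' (q : Set D') ⊆ MMset k0 r (m + 2) := fun h => hqM (h.antisymm hsub)
      obtain ⟨_, ⟨d, hdq, rfl⟩, hdM⟩ := Set.not_subset.1 this
      have hdD := hmem.1 d.2
      obtain ⟨c, hc, μ, hμ, e⟩ := hdD.2
      have hc0 : c ≠ 0 := by
        rintro rfl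
        rw [zero_add] at e
        exact hdM ⟨by rw [e]; exact hμ, hdD⟩
      obtain ⟨b, hb, μ', hμ', e'⟩ := aux_approx k0 r (Dset k0 r (m + 1)) (n := m + 1)
        (inv_mem hc) (inv_ne_zero hc0)
      have hbD : b ∈ D' := hmem.2 ⟨hb, c⁻¹, inv_mem hc, μ', hμ', e'⟩
      have hM : d.1 * b - 1 ∈ Mset k0 r (m + 2) := by
        have h1 := M_add k0 r (M_add k0 r (M_mul k0 r hμ (k_mem_V k0 r (inv_mem hc)))
          (M_mul k0 r hμ' (k_mem_V k0 r hc))) (M_mul k0 r hμ (M_sub_V k0 r hμ'))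
        convert h1 using 1
        rw [e, e']
        field_simp
        ring
      have hD1 : d.1 * b - 1 ∈ D' := D'.sub_mem (D'.mul_mem d.2 hbD) D'.one_mem
      obtain ⟨z, hz, ez⟩ := hsub ⟨hM, hmem.1 hD1⟩
      apply hqp.ne_top
      rw [Ideal.eq_top_iff_one]
      have : (1 : D') = d * ⟨b, hbD⟩ - z := by
        apply Subtype.ext
        simp [ez]
      rw [this]
      exact q.sub_mem (q.mul_mem_right _ hdq) hz
    · obtain ⟨s, ⟨hsM, hsD⟩, hsq⟩ := Set.not_subset.1 hsub
      obtain ⟨N, hN⟩ := K_scale k0 r (kr_sub_K k0 r hx)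
      obtain ⟨v, hv, rfl⟩ := hsM
      have hs0 : ambY k0 r * v ≠ 0 := by
        intro h
        apply hsq
        rw [h]
        exact ⟨0, q.zero_mem, rfl⟩
      have hsD' := hmem.2 hsD
      have hpq : (ambY k0 r * v) ^ (N + 1) ∉ Subtype.val '' (q : Set D') := by
        rintro ⟨z, hz, ez⟩
        apply hsq
        refine ⟨⟨_, hsD'⟩, hqp.mem_of_pow_mem (N + 1) ?_, rfl⟩
        have : z = (⟨_, hsD'⟩ : D') ^ (N + 1) := Subtype.ext (by simp [ez])
        rw [← this]; exact hz
      refine ⟨x * (ambY k0 r * v) ^ (N + 1), ?_, (ambY k0 r * v) ^ (N + 1),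
        hmem.1 (D'.pow_mem hsD' _), hpq, ?_⟩
      · refine ⟨hBmul hx (hBpow _ hsD.1), M_sub_A k0 r ⟨(ambY k0 r ^ N * x) * v ^ (N + 1),
          (Vring k0 r (m + 2)).mul_mem hN ((Vring k0 r (m + 2)).pow_mem hv _), ?_⟩⟩
        ring
      · rw [mul_div_cancel_right₀ _ (pow_ne_zero _ hs0)]
  · intro x hx
    let J : Ideal D' :=
      { carrier := {d | d.1 * x ∈ D'}
        zero_mem' := by simp [D'.zero_mem]
        add_mem' := fun {a b} ha hb => by
          have := D'.add_mem ha hb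
          simpa [add_mul] using this
        smul_mem' := fun a b hb => by
          have := D'.mul_mem a.2 hb
          simpa [mul_assoc] using this }
    have hτD : (ambX' k0 r (m + 2))⁻¹ ∈ D' := hMD hTiB hTM
    have hrad : (⟨_, hτD⟩ : D') ∈ J.radical := by
      rw [Ideal.radical_eq_sInf, Submodule.mem_sInf]
      rintro q ⟨hJq, hqp⟩
      by_cases hqM : Subtype.val '' (q : Set D') = MMset k0 r (m + 2)
      · have h1 : (ambX' k0 r (m + 2))⁻¹ ∈ MMset k0 r (m + 2) := ⟨hTM, hmem.1 hτD⟩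
        rw [← hqM] at h1
        obtain ⟨z, hz, ez⟩ := h1
        have : z = ⟨_, hτD⟩ := Subtype.ext ez
        rw [← this]; exact hz
      · exfalso
        obtain ⟨a, ha, b, hb, hbq, e⟩ := Set.mem_iInter₂.1 hx q ⟨hqp, hqM⟩
        have hb0 : b ≠ 0 := by
          rintro rfl
          exact hbq ⟨0, q.zero_mem, rfl⟩
        refine hbq ⟨⟨b, hmem.2 hb⟩, hJq ?_, rfl⟩
        change b * x ∈ D'
        rw [e, mul_div_cancel₀ _ hb0]
        exact hmem.2 ha
    obtain ⟨N, hN⟩ := hrad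
    have h1 : ((ambX' k0 r (m + 2))⁻¹) ^ N * x ∈ D' := hN
    have h2 := hBmul (hBpow N hTB) (hmem.1 h1).1
    rw [← mul_assoc, ← mul_pow, mul_inv_cancel₀ hT0, one_pow, one_mul] at h2
    exact h2
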